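/- arXiv:1304.0936 — 5 statements merged into one kernel-verified Lean document; each statement's English description precedes it below -/
import Mathlib

section
/- Let n, s, r be natural numbers, let w₁,…,wₛ be elements of the free group Fₙ on n generators whose abelianizations w̄₁,…,w̄ₛ ∈ ℤⁿ are linearly independent, and let H := Fₙ / N be the quotient of Fₙ by the normal closure N of {w₁,…,wₛ}. Suppose h₁,…,h_r ∈ H are such that for all integers c₁,…,c_r not all zero, the element c₁·h̄₁ + ⋯ + c_r·h̄_r of the abelianization of H is not torsion, where h̄ denotes the image of h in the abelianization. Then h₁,…,h_r form a basis of a free subgroup of H of rank r; that is, the group homomorphism F_r →* H from the free group on r generators sending the i-th generator to hᵢ is injective. -/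
/-- The abelianization map `Fₙ → ℤⁿ` (written multiplicatively). -/
def freeAbelianization (n : ℕ) : FreeGroup (Fin n) →* Multiplicative (Fin n → ℤ) :=
  FreeGroup.lift fun i => Multiplicative.ofAdd (Pi.single i 1)

/-- `w̄ ∈ ℤⁿ`, the abelianization of a word `w ∈ Fₙ`. -/
def wordBar {n : ℕ} (w : FreeGroup (Fin n)) : Fin n → ℤ :=
  Multiplicative.toAdd (freeAbelianization n w)

/-!
A family in a free group `F` that is independent in `F^ab` can be mapped to any prescribed elements
of a group `G` with a finite central series whose factors are divisible. One lifts through one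
central extension at a time: since `F` is free a homomorphism to the smaller quotient lifts, and the
resulting error on the family is corrected by a homomorphism from `F^ab` to the central divisible
kernel, which exists because divisible groups are injective.

The groups of unitriangular matrices over `ℚ` are such groups `G`, and every `v ≠ 1` in the free
group on the `hₖ` survives under some homomorphism `ψ` to one of them. The relators `wᵢ` together
with lifts of the `hₖ` to `F` are independent in `F^ab`, so some homomorphism `F → G` sends each
`wᵢ` to `1` and agrees with `ψ` on the `hₖ`. It factors through `H`, hence `v` is nontrivial in `H`.
-/

open Function Subgroup
open scoped commutatorElement

/-- A family in `Γ` whose classes in the abelianization of `Γ` are linearly independent over `ℤ`.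
Both hypotheses of the theorem, on the relators and on the elements `hᵢ`, take this form. -/
def IsAbelianIndep {ι Γ : Type*} [Group Γ] (f : ι → Γ) : Prop :=
  LinearIndependent ℤ fun i => Additive.ofMul (Abelianization.of (f i))

namespace IsAbelianIndep

variable {ι Γ : Type*} [Group Γ] {f : ι → Γ}

theorem exists_hom_of_divisible (hf : IsAbelianIndep f) {Z : Type*} [CommGroup Z]
    (hZ : ∀ n : ℕ, n ≠ 0 → Surjective fun z : Z => z ^ n) (t : ι → Z) :
    ∃ c : Γ →* Z, ∀ i, c (f i) = t i := by
  let _ : DivisibleBy (Additive Z) ℕ :=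
    divisibleByOfSMulRightSurj (Additive Z) ℕ fun hn => hZ _ hn
  let _ : DivisibleBy (Additive Z) ℤ := AddGroup.divisibleByIntOfDivisibleByNat (Additive Z)
  obtain ⟨c, hc⟩ := (Module.Baer.of_divisible (Additive Z)).extension_property
    (Finsupp.linearCombination ℤ fun i => Additive.ofMul (Abelianization.of (f i))) hf
    (Finsupp.linearCombination ℤ fun i => Additive.ofMul (t i))
  refine ⟨(MonoidHom.toAdditive.symm c.toAddMonoidHom).comp Abelianization.of, fun i => ?_⟩
  have hci := LinearMap.congr_fun hc (Finsupp.single i 1)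
  simp only [LinearMap.comp_apply, Finsupp.linearCombination_single, one_smul] at hci
  exact congrArg Additive.toMul hci

theorem exists_hom_of_central_divisible (hf : IsAbelianIndep f) {Q : Type*} [Group Q]
    {Z : Subgroup Q} (hZ : Z ≤ center Q) (hdiv : ∀ n : ℕ, n ≠ 0 → ∀ z ∈ Z, ∃ y ∈ Z, y ^ n = z)
    (x₀ : Γ →* Q) {t : ι → Q} (ht : ∀ i, (x₀ (f i))⁻¹ * t i ∈ Z) :
    ∃ x : Γ →* Q, ∀ i, x (f i) = t i := by
  let _ : CommGroup Z :=
    { mul_comm := fun y z => Subtype.ext (mem_center_iff.1 (hZ z.2) y) }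
  obtain ⟨c, hc⟩ := hf.exists_hom_of_divisible (Z := Z)
    (fun n hn z => let ⟨y, hy, hyz⟩ := hdiv n hn z z.2; ⟨⟨y, hy⟩, Subtype.ext hyz⟩)
    (fun i => ⟨_, ht i⟩)
  have hcomm : ∀ g z, Commute (x₀ g) (Z.subtype z) := fun g z =>
    mem_center_iff.1 (hZ z.2) (x₀ g)
  refine ⟨(x₀.noncommCoprod Z.subtype hcomm).comp ((MonoidHom.id Γ).prod c), fun i => ?_⟩
  simp [hc]

theorem of_linearIndependent_comp {C : Type*} [CommGroup C] (p : Γ →* C)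
    (hf : LinearIndependent ℤ fun i => Additive.ofMul (p (f i))) : IsAbelianIndep f :=
  LinearIndependent.of_comp (MonoidHom.toAdditive (Abelianization.lift p)).toIntLinearMap hf

theorem sumElim {κ Q : Type*} [Group Q] {w : ι → Γ} {h : κ → Γ}
    (hw : IsAbelianIndep w) (p : Γ →* Q) (hpw : ∀ i, p (w i) = 1)
    (hh : IsAbelianIndep (p ∘ h)) : IsAbelianIndep (Sum.elim w h) := by
  let P := (MonoidHom.toAdditive (Abelianization.map p)).toIntLinearMap
  let cl (g : Γ) : Additive (Abelianization Γ) := Additive.ofMul (Abelianization.of g)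
  have hPh : LinearIndependent ℤ (P ∘ cl ∘ h) := hh
  have hker : Submodule.span ℤ (Set.range (cl ∘ w)) ≤ LinearMap.ker P := by
    rw [Submodule.span_le]
    rintro _ ⟨i, rfl⟩
    change Additive.ofMul (Abelianization.of (p (w i))) = 0
    simp [hpw]
  have hdisj := (Submodule.range_ker_disjoint hPh).symm.mono_left hker
  have hsum : cl ∘ Sum.elim w h = Sum.elim (cl ∘ w) (cl ∘ h) := Sum.comp_elim _ _ _
  change LinearIndependent ℤ (cl ∘ Sum.elim w h)
  rw [hsum]
  exact hw.sum_type hPh.of_comp hdisj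

theorem of_not_isOfFinOrder [Fintype ι]
    (hf : ∀ c : ι → ℤ, c ≠ 0 → ¬ IsOfFinOrder (∏ i, Abelianization.of (f i) ^ c i)) :
    IsAbelianIndep f := by
  refine Fintype.linearIndependent_iff.2 fun c hc => congrFun (not_not.1 fun hne => hf c hne ?_)
  have hone : ∏ i, Abelianization.of (f i) ^ c i = 1 := congrArg Additive.toMul hc
  exact hone ▸ IsOfFinOrder.one

end IsAbelianIndep

theorem exists_freeGroup_lift_of_surjective {α G Q : Type*} [Group G] [Group Q] {π : G →* Q}
    (hπ : Surjective π) (y : FreeGroup α →* Q) : ∃ x : FreeGroup α →* G, π.comp x = y := by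
  refine ⟨FreeGroup.lift fun a => surjInv hπ (y (FreeGroup.of a)), ?_⟩
  ext a
  simp [surjInv_eq]

/-- A descending central series `H` with divisible factors `H j / H (j + 1)`, through which
homomorphisms from free groups are lifted. Reaching `⊥` is not part of the definition, and
divisibility is expressed by roots in `H j` modulo `H (j + 1)`. -/
structure IsDivisibleCentralSeries {G : Type*} [Group G] (H : ℕ → Subgroup G) : Prop where
  zero_eq_top : H 0 = ⊤
  commutator_mem {j : ℕ} {x : G} (hx : x ∈ H j) (g : G) : ⁅g, x⁆ ∈ H (j + 1)
  exists_pow {j n : ℕ} (hn : n ≠ 0) {x : G} (hx : x ∈ H j) :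
    ∃ y ∈ H j, (y ^ n)⁻¹ * x ∈ H (j + 1)

namespace IsDivisibleCentralSeries

variable {G : Type*} [Group G] {H : ℕ → Subgroup G} [∀ j, (H j).Normal]

theorem map_mk_le_center (hH : IsDivisibleCentralSeries H) (j : ℕ) :
    (H j).map (QuotientGroup.mk' (H (j + 1))) ≤ center (G ⧸ H (j + 1)) := by
  rintro _ ⟨x, hx, rfl⟩
  refine mem_center_iff.2 fun q => ?_
  obtain ⟨g, rfl⟩ := QuotientGroup.mk'_surjective _ q
  rw [← commutatorElement_eq_one_iff_mul_comm, ← map_commutatorElement]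
  exact (QuotientGroup.eq_one_iff _).2 (hH.commutator_mem hx g)

theorem exists_pow_of_mem_map_mk (hH : IsDivisibleCentralSeries H) (j n : ℕ)
    (hn : n ≠ 0) :
    ∀ z ∈ (H j).map (QuotientGroup.mk' (H (j + 1))),
      ∃ y ∈ (H j).map (QuotientGroup.mk' (H (j + 1))), y ^ n = z := by
  rintro _ ⟨x, hx, rfl⟩
  obtain ⟨y, hy, hyx⟩ := hH.exists_pow hn hx
  exact ⟨_, mem_map_of_mem _ hy, (map_pow _ y n).symm.trans (QuotientGroup.eq.2 hyx)⟩

end IsDivisibleCentralSeries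

namespace IsAbelianIndep

variable {ι α G : Type*} [Group G] {f : ι → FreeGroup α} {H : ℕ → Subgroup G}
  [∀ j, (H j).Normal]

theorem exists_hom_inv_mul_mem (hf : IsAbelianIndep f) (hH : IsDivisibleCentralSeries H)
    (t : ι → G) (j : ℕ) : ∃ x : FreeGroup α →* G, ∀ i, (x (f i))⁻¹ * t i ∈ H j := by
  induction j with
  | zero => exact ⟨1, fun i => hH.zero_eq_top ▸ mem_top _⟩
  | succ j ih =>
    obtain ⟨x, hx⟩ := ih
    let π := QuotientGroup.mk' (H (j + 1))
    obtain ⟨y, hy⟩ := hf.exists_hom_of_central_divisible (hH.map_mk_le_center j)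
      (hH.exists_pow_of_mem_map_mk j) (π.comp x) (t := π ∘ t)
      fun i => ⟨_, hx i, by simp [π]⟩
    obtain ⟨x', rfl⟩ := exists_freeGroup_lift_of_surjective (QuotientGroup.mk'_surjective _) y
    exact ⟨x', fun i => QuotientGroup.eq.1 (hy i)⟩

theorem exists_hom_of_divisibleCentralSeries (hf : IsAbelianIndep f)
    (hH : IsDivisibleCentralSeries H) {m : ℕ} (hm : H m = ⊥) (t : ι → G) :
    ∃ x : FreeGroup α →* G, ∀ i, x (f i) = t i := by
  obtain ⟨x, hx⟩ := hf.exists_hom_inv_mul_mem hH t m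
  simp only [hm, mem_bot, inv_mul_eq_one] at hx
  exact ⟨x, hx⟩

end IsAbelianIndep

/-- A finite descending filtration `J 0 ≥ J 1 ≥ ⋯ ≥ J length = 0` of a `ℚ`-algebra with
`1 ∈ J 0` and `J k * J l ≤ J (k + l)`. It is the source of unipotent groups `1 + J k`; the
subalgebra `J 0` need not be all of `A`. -/
structure NilpotentFiltration (A : Type*) [Ring A] [Algebra ℚ A] where
  toFun : ℕ → Submodule ℚ A
  antitone : Antitone toFun
  one_mem : 1 ∈ toFun 0
  protected mul_mem {k l : ℕ} {a b : A} (ha : a ∈ toFun k) (hb : b ∈ toFun l) :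
    a * b ∈ toFun (k + l)
  length : ℕ
  length_eq_bot : toFun length = ⊥

namespace NilpotentFiltration

variable {A : Type*} [Ring A] [Algebra ℚ A] (J : NilpotentFiltration A)

instance : CoeFun (NilpotentFiltration A) fun _ => ℕ → Submodule ℚ A := ⟨toFun⟩

protected theorem pow_mem {a : A} {k : ℕ} (ha : a ∈ J k) (n : ℕ) : a ^ n ∈ J (n * k) := by
  induction n with
  | zero => simpa using J.one_mem
  | succ n ih =>
    rw [pow_succ, add_mul, one_mul]
    exact J.mul_mem ih ha

theorem pow_length_eq_zero {a : A} (ha : a ∈ J 1) : a ^ J.length = 0 := by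
  have := J.pow_mem ha J.length
  rwa [mul_one, J.length_eq_bot, Submodule.mem_bot] at this

theorem val_mem_zero {g : Aˣ} (hg : (g : A) - 1 ∈ J 1) : (g : A) ∈ J 0 := by
  simpa using (J 0).add_mem (J.antitone zero_le_one hg) J.one_mem

theorem inv_mem_zero {g : Aˣ} (hg : (g : A) - 1 ∈ J 1) : ((g⁻¹ : Aˣ) : A) ∈ J 0 := by
  have ha : 1 - (g : A) ∈ J 1 := by simpa using (J 1).neg_mem hg
  have hgeom : (g : A) * ∑ i ∈ Finset.range J.length, (1 - (g : A)) ^ i = 1 := by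
    have := mul_neg_geom_sum (1 - (g : A)) J.length
    rwa [J.pow_length_eq_zero ha, sub_sub_cancel, sub_zero] at this
  rw [Units.inv_eq_of_mul_eq_one_right hgeom]
  exact Submodule.sum_mem _ fun i _ => J.antitone (Nat.zero_le _) (J.pow_mem ha i)

/-- The group of units `1 + a` with `a ∈ J (j + 1)`. The index is shifted so that `unipotent 0` is
the whole unipotent group of the filtration. -/
def unipotent (j : ℕ) : Subgroup Aˣ where
  carrier := {g | (g : A) - 1 ∈ J (j + 1)}
  one_mem' := by simp
  mul_mem' {g h} hg hh := by
    have hg0 := J.val_mem_zero (J.antitone (Nat.le_add_left 1 j) hg)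
    have : ((g * h : Aˣ) : A) - 1 = (g : A) * (h - 1) + (g - 1) := by push_cast; noncomm_ring
    rw [Set.mem_ofPred_eq, this]
    refine (J _).add_mem ?_ hg
    simpa using J.mul_mem hg0 hh
  inv_mem' {g} hg := by
    have hg0 := J.inv_mem_zero (J.antitone (Nat.le_add_left 1 j) hg)
    have : ((g⁻¹ : Aˣ) : A) - 1 = -(((g⁻¹ : Aˣ) : A) * (g - 1)) := by simp [mul_sub]
    rw [Set.mem_ofPred_eq, this]
    refine (J _).neg_mem ?_
    simpa using J.mul_mem hg0 hg

theorem mem_unipotent {j : ℕ} {g : Aˣ} : g ∈ J.unipotent j ↔ (g : A) - 1 ∈ J (j + 1) :=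
  Iff.rfl

theorem one_add_pow_sub_mem {k : ℕ} {b : A} (hk : 1 ≤ k) (hb : b ∈ J k) (n : ℕ) :
    (1 + b) ^ n - (1 + n • b) ∈ J (k + 1) := by
  induction n with
  | zero => simp
  | succ n ih =>
    have h1b : 1 + b ∈ J 0 := (J 0).add_mem J.one_mem (J.antitone (Nat.zero_le k) hb)
    have hsplit : (1 + b) ^ (n + 1) - (1 + (n + 1) • b) =
        (1 + b) * ((1 + b) ^ n - (1 + n • b)) + n • (b * b) := by
      rw [pow_succ', succ_nsmul, mul_sub, mul_add, mul_one, mul_smul_comm, add_mul, one_mul,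
        add_mul, one_mul, smul_add]
      abel
    rw [hsplit]
    refine (J _).add_mem ?_ ((J _).nsmul_mem (J.antitone (by lia) (J.mul_mem hb hb)) n)
    simpa using J.mul_mem h1b ih

theorem unipotent_antitone : Antitone J.unipotent := fun _ _ hij _ hg =>
  J.antitone (Nat.add_le_add_right hij 1) hg

theorem conj_mem_unipotent {j : ℕ} {g x : Aˣ} (hg : g ∈ J.unipotent 0) (hx : x ∈ J.unipotent j) :
    g * x * g⁻¹ ∈ J.unipotent j := by
  have hsub : ((g * x * g⁻¹ : Aˣ) : A) - 1 = g * ((x : A) - 1) * (g⁻¹ : Aˣ) := by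
    simp [mul_sub, sub_mul]
  rw [mem_unipotent, hsub]
  simpa using J.mul_mem (J.mul_mem (J.val_mem_zero hg) hx) (J.inv_mem_zero hg)

theorem commutator_mem_unipotent {j : ℕ} {g x : Aˣ} (hg : g ∈ J.unipotent 0)
    (hx : x ∈ J.unipotent j) : ⁅g, x⁆ ∈ J.unipotent (j + 1) := by
  have hsub : ((⁅g, x⁆ : Aˣ) : A) - 1 =
      (((g : A) - 1) * (x - 1) - (x - 1) * (g - 1)) * ((x * g)⁻¹ : Aˣ) := by
    have hcomm : ((g : A) - 1) * (x - 1) - (x - 1) * (g - 1) =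
        ((g * x : Aˣ) : A) - (x * g : Aˣ) := by push_cast; noncomm_ring
    rw [hcomm, sub_mul, Units.mul_inv, ← Units.val_mul, commutatorElement_def, mul_inv_rev]
    simp only [mul_assoc]
  have hxg : x * g ∈ J.unipotent 0 := mul_mem (J.unipotent_antitone (Nat.zero_le j) hx) hg
  rw [mem_unipotent, hsub]
  refine J.mul_mem (k := j + 1 + 1) (l := 0) ((J _).sub_mem ?_ ?_) (J.inv_mem_zero hxg)
  · rw [add_comm]
    exact J.mul_mem hg hx
  · exact J.mul_mem hx hg

theorem exists_pow_mem_unipotent {j n : ℕ} (hn : n ≠ 0) {x : Aˣ} (hx : x ∈ J.unipotent j) :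
    ∃ y ∈ J.unipotent j, (y ^ n)⁻¹ * x ∈ J.unipotent (j + 1) := by
  -- `1 + (x - 1) / n` is an `n`-th root of `x` to leading order.
  set b : A := (n : ℚ)⁻¹ • ((x : A) - 1) with hb_def
  have hb : b ∈ J (j + 1) := (J _).smul_mem _ hx
  have hnb : n • b = (x : A) - 1 := by
    rw [hb_def, ← Nat.cast_smul_eq_nsmul ℚ, smul_inv_smul₀ (Nat.cast_ne_zero.2 hn)]
  obtain ⟨y, hy⟩ := IsNilpotent.isUnit_one_add
    ⟨_, J.pow_length_eq_zero (J.antitone (Nat.le_add_left 1 j) hb)⟩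
  have hyj : y ∈ J.unipotent j := by simpa [mem_unipotent, hy] using hb
  have hyn : y ^ n ∈ J.unipotent 0 := pow_mem (J.unipotent_antitone (Nat.zero_le j) hyj) n
  have hsub : (((y ^ n)⁻¹ * x : Aˣ) : A) - 1 =
      -(((y ^ n)⁻¹ : Aˣ) * ((1 + b) ^ n - (1 + n • b))) := by
    rw [hnb, ← hy, add_sub_cancel, ← Units.val_pow_eq_pow_val, mul_sub, Units.inv_mul, neg_sub,
      Units.val_mul]
  refine ⟨y, hyj, ?_⟩
  rw [mem_unipotent, hsub]
  simpa using J.mul_mem (J.inv_mem_zero hyn) (J.one_add_pow_sub_mem (Nat.le_add_left 1 j) hb n)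

/-- The groups `1 + J (j + 1)` as subgroups of the unipotent group `1 + J 1`, of which they form a
divisible central series. -/
def unipotentSeries (j : ℕ) : Subgroup (J.unipotent 0) :=
  (J.unipotent j).subgroupOf (J.unipotent 0)

instance (j : ℕ) : (J.unipotentSeries j).Normal :=
  ⟨fun _ hx g => J.conj_mem_unipotent g.2 hx⟩

theorem isDivisibleCentralSeries_unipotentSeries :
    IsDivisibleCentralSeries J.unipotentSeries where
  zero_eq_top := subgroupOf_self _
  commutator_mem hx g := J.commutator_mem_unipotent g.2 hx
  exists_pow hn _ hx :=
    let ⟨y, hy, hyx⟩ := J.exists_pow_mem_unipotent hn hx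
    ⟨⟨y, J.unipotent_antitone (Nat.zero_le _) hy⟩, hy, hyx⟩

theorem unipotentSeries_length : J.unipotentSeries J.length = ⊥ := by
  refine (eq_bot_iff_forall _).2 fun x hx => Subtype.ext (Units.ext (sub_eq_zero.1 ?_))
  have := J.antitone (Nat.le_succ J.length) hx
  rwa [J.length_eq_bot, Submodule.mem_bot] at this

end NilpotentFiltration

theorem IsAbelianIndep.exists_hom_unipotent {ι α A : Type*} [Ring A] [Algebra ℚ A]
    {f : ι → FreeGroup α} (hf : IsAbelianIndep f) (J : NilpotentFiltration A)
    (t : ι → J.unipotent 0) : ∃ x : FreeGroup α →* J.unipotent 0, ∀ i, x (f i) = t i :=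
  hf.exists_hom_of_divisibleCentralSeries J.isDivisibleCentralSeries_unipotentSeries
    J.unipotentSeries_length t

/-- The filtration of square matrices by distance from the diagonal: level `k` consists of the
matrices supported on the entries `(i, j)` with `i + k ≤ j`. Its unipotent group is the group of
upper unitriangular matrices. -/
def triangularFiltration (m : ℕ) : NilpotentFiltration (Matrix (Fin m) (Fin m) ℚ) where
  toFun k :=
    { carrier := {M | ∀ i j : Fin m, (j : ℕ) < i + k → M i j = 0}
      zero_mem' := fun _ _ _ => rfl
      add_mem' := fun hM hN i j hij => by rw [Matrix.add_apply, hM i j hij, hN i j hij, add_zero]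
      smul_mem' := fun c M hM i j hij => by rw [Matrix.smul_apply, hM i j hij, smul_zero] }
  antitone k l hkl M hM i j hij := hM i j (by lia)
  one_mem i j hij := Matrix.one_apply_ne (by rintro rfl; simp at hij)
  mul_mem {k l M N} hM hN i j hij := by
    rw [Matrix.mul_apply]
    refine Finset.sum_eq_zero fun p _ => ?_
    by_cases hp : (p : ℕ) < i + k
    · rw [hM i p hp, zero_mul]
    · rw [hN p j (by lia), mul_zero]
  length := m
  length_eq_bot := (Submodule.eq_bot_iff _).2 fun M hM => by
    ext i j
    exact hM i j (by lia)

/-- For `X * X = 0`, the one-parameter group `c ↦ 1 + c X` of units. It serves to compute the powers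
of the unit `1 + X`. -/
def oneAddZSMulUnits {A : Type*} [Ring A] {X : A} (hX : X * X = 0) : Multiplicative ℤ →* Aˣ :=
  MonoidHom.toHomUnits
    { toFun := fun c => 1 + c.toAdd • X
      map_one' := by simp
      map_mul' := fun c d => by
        simp only [toAdd_mul, add_smul, mul_add, add_mul, one_mul, mul_one, smul_mul_smul_comm, hX,
          smul_zero, add_zero, add_assoc] }

theorem val_oneAddZSMulUnits_zpow {A : Type*} [Ring A] {X : A} (hX : X * X = 0) (e : ℤ) :
    ((oneAddZSMulUnits hX (.ofAdd 1) ^ e : Aˣ) : A) = 1 + e • X := by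
  rw [← map_zpow, ← ofAdd_zsmul, smul_eq_mul, mul_one]
  rfl

section StepMatrix

variable {κ : Type*} [DecidableEq κ] (m : ℕ) (l : List κ)

/-- The matrix of the letter `a` in the unitriangular representation attached to the word `l`: its
nonzero entries are ones at the positions `(i, i + 1)` where the `i`-th letter of `l`, counting from
`0`, is `a`. The only nonzero product of `l.length` such matrices is the one spelling `l`. -/
def stepMatrix (a : κ) : Matrix (Fin (m + 1)) (Fin (m + 1)) ℚ :=
  .of fun i j => if (j : ℕ) = i + 1 ∧ l[(i : ℕ)]? = some a then 1 else 0

variable {m l}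

theorem stepMatrix_mem_triangularFiltration (a : κ) :
    stepMatrix m l a ∈ triangularFiltration (m + 1) 1 := fun _ _ hij =>
  if_neg fun h => hij.ne h.1

theorem mul_stepMatrix_apply_succ (M : Matrix (Fin (m + 1)) (Fin (m + 1)) ℚ) (a : κ)
    (i : Fin (m + 1)) (p : Fin m) :
    (M * stepMatrix m l a) i p.succ = if l[(p : ℕ)]? = some a then M i p.castSucc else 0 := by
  rw [Matrix.mul_apply, Finset.sum_eq_single p.castSucc]
  · simp [stepMatrix]
  · intro q _ hq
    have : (p : ℕ) ≠ q := fun h => hq (Fin.ext h.symm)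
    simp [stepMatrix, this]
  · simp

theorem stepMatrix_mul_self (hl : l.IsChain (· ≠ ·)) (a : κ) :
    stepMatrix m l a * stepMatrix m l a = 0 := by
  ext i j
  cases j using Fin.cases with
  | zero => simp [Matrix.mul_apply, stepMatrix]
  | succ p =>
    rw [mul_stepMatrix_apply_succ, Matrix.zero_apply, ite_eq_right_iff]
    refine fun hp => if_neg fun ⟨hpi, hi⟩ => ?_
    rw [Fin.val_castSucc] at hpi
    rw [hpi] at hp
    obtain ⟨hlen, hp⟩ := List.getElem?_eq_some_iff.1 hp
    rw [List.getElem?_eq_getElem (Nat.lt_of_succ_lt hlen)] at hi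
    exact List.isChain_iff_getElem.1 hl i hlen ((Option.some_inj.1 hi).trans hp.symm)

theorem prod_one_add_stepMatrix_zero_apply {L : List (κ × ℤ)} (hL : L.map Prod.fst <+: l)
    {j : Fin (m + 1)} (hj : L.length ≤ j) :
    (L.map fun s => 1 + s.2 • stepMatrix m l s.1).prod 0 j =
      if L.length = j then ((L.map Prod.snd).prod : ℚ) else 0 := by
  induction L using List.reverseRecOn generalizing j with
  | nil => simp [Matrix.one_apply, Fin.ext_iff]
  | append_singleton L s ih =>
    have hL' : L.map Prod.fst <+: l := .trans (by simp) hL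
    have hs : l[L.length]? = some s.1 := by
      obtain ⟨r, rfl⟩ := hL
      simp
    rw [List.length_append, List.length_singleton] at hj ⊢
    cases j using Fin.cases with
    | zero => simp at hj
    | succ p =>
      have hp : L.length ≤ p := by simpa using hj
      simp only [List.map_append, List.prod_append, List.map_singleton, List.prod_singleton,
        mul_add, mul_one, Matrix.add_apply, mul_smul_comm, Matrix.smul_apply,
        mul_stepMatrix_apply_succ]
      rw [ih hL' (hp.trans (Nat.le_succ _)), ih hL' hp]
      rcases hp.eq_or_lt with hp | hp
      · simp [← hp, hs, mul_comm]
      · simp [hp.ne, (hp.trans (Nat.lt_succ_self _)).ne]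

/-- The unitriangular representation `a ↦ 1 + stepMatrix m l a` of the free group attached to a word
`l` without repeated adjacent letters. -/
def stepHom (m : ℕ) (hl : l.IsChain (· ≠ ·)) :
    FreeGroup κ →* (triangularFiltration (m + 1)).unipotent 0 :=
  FreeGroup.lift fun a => ⟨oneAddZSMulUnits (stepMatrix_mul_self (m := m) hl a) (.ofAdd 1), by
    simpa [NilpotentFiltration.mem_unipotent, oneAddZSMulUnits] using
      stepMatrix_mem_triangularFiltration a⟩

theorem val_stepHom_prod (hl : l.IsChain (· ≠ ·)) (L : List (κ × ℤ)) :
    ((stepHom m hl (L.map fun s => FreeGroup.of s.1 ^ s.2).prod).1 :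
      Matrix (Fin (m + 1)) (Fin (m + 1)) ℚ) =
      (L.map fun s => 1 + s.2 • stepMatrix m l s.1).prod := by
  induction L with
  | nil => simp
  | cons s L ih =>
    have hs := val_oneAddZSMulUnits_zpow (stepMatrix_mul_self (m := m) hl s.1) s.2
    rw [List.map_cons, List.prod_cons, map_mul, map_zpow, List.map_cons, List.prod_cons, ← ih, ← hs,
      stepHom, FreeGroup.lift_apply_of]
    rfl

end StepMatrix

theorem exists_prod_syllables {α : Type*} (v : FreeGroup α) :
    ∃ L : List (α × ℤ), L.IsChain (fun a b => a.1 ≠ b.1) ∧ (∀ a ∈ L, a.2 ≠ 0) ∧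
      (L.map fun a => FreeGroup.of a.1 ^ a.2).prod = v := by
  classical
  let e := FreeGroup.freeGroupUnitEquivInt
  have he (x : FreeGroup Unit) : FreeGroup.of () ^ e x = x := e.symm_apply_apply x
  let W := Monoid.CoprodI.Word.equiv (freeGroupEquivCoprodI v)
  have hW : W.prod = freeGroupEquivCoprodI v := Monoid.CoprodI.Word.equiv.symm_apply_apply _
  refine ⟨W.toList.map fun s => (s.1, e s.2), ?_, ?_, ?_⟩
  · simpa [List.isChain_map] using W.chain_ne
  · simp only [List.forall_mem_map]
    exact fun s hs hzero => W.ne_one s hs (by rw [← he s.2, hzero, zpow_zero])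
  · apply freeGroupEquivCoprodI.injective
    rw [← hW, map_list_prod, List.map_map, List.map_map, Monoid.CoprodI.Word.prod]
    congr 2
    ext s
    simp only [comp_apply, map_zpow]
    have hof : freeGroupEquivCoprodI (FreeGroup.of s.1) =
        Monoid.CoprodI.of (M := fun _ : α => FreeGroup Unit) (i := s.1) (FreeGroup.of ()) := by
      simp [freeGroupEquivCoprodI]
    rw [hof, ← map_zpow, he]

theorem exists_hom_unitriangular_ne_one {κ : Type*} {v : FreeGroup κ} (hv : v ≠ 1) :
    ∃ (m : ℕ) (ψ : FreeGroup κ →* (triangularFiltration m).unipotent 0), ψ v ≠ 1 := by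
  classical
  obtain ⟨L, hchain, hL, rfl⟩ := exists_prod_syllables v
  have hl : (L.map Prod.fst).IsChain (· ≠ ·) := (List.isChain_map _).2 hchain
  refine ⟨L.length + 1, stepHom L.length hl, fun hone => ?_⟩
  have hcorner := prod_one_add_stepMatrix_zero_apply (L := L) List.prefix_rfl
    (j := Fin.last L.length) le_rfl
  have hlast : 0 ≠ Fin.last L.length := by
    intro hzero
    have hnil : L = [] := by simpa [Fin.ext_iff, eq_comm] using hzero
    simp [hnil] at hv
  rw [← val_stepHom_prod hl, hone, Fin.val_last, if_pos rfl] at hcorner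
  have hexponents : (L.map Prod.snd).prod ≠ 0 := List.prod_ne_zero fun hzero =>
    let ⟨s, hs, hs0⟩ := List.mem_map.1 hzero
    hL s hs hs0
  exact hexponents (Int.cast_eq_zero.1 (hcorner.symm.trans (Matrix.one_apply_ne hlast)))

theorem free_subgroup_of_lin_indep_general {α ι κ : Type*} {w : ι → FreeGroup α}
    (hw : IsAbelianIndep w) {h : κ → FreeGroup α ⧸ normalClosure (Set.range w)}
    (hh : IsAbelianIndep h) : Injective (FreeGroup.lift h) := by
  have hmk := QuotientGroup.mk'_surjective (normalClosure (Set.range w))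
  obtain ⟨h, rfl⟩ : ∃ h', QuotientGroup.mk' _ ∘ h' = h :=
    ⟨surjInv hmk ∘ h, funext fun k => surjInv_eq hmk (h k)⟩
  have hrel : ∀ i, QuotientGroup.mk' (normalClosure (Set.range w)) (w i) = 1 := fun i =>
    (QuotientGroup.eq_one_iff _).2 (subset_normalClosure (Set.mem_range_self i))
  have hindep := hw.sumElim _ hrel hh
  refine (injective_iff_map_eq_one _).2 fun v hv => not_not.1 fun hne => ?_
  obtain ⟨m, ψ, hψ⟩ := exists_hom_unitriangular_ne_one hne
  obtain ⟨x, hx⟩ := hindep.exists_hom_unipotent _ (Sum.elim 1 (ψ ∘ FreeGroup.of))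
  have hker : normalClosure (Set.range w) ≤ x.ker :=
    normalClosure_le_normal (Set.range_subset_iff.2 fun i => hx (.inl i))
  have hfactor : (QuotientGroup.lift _ x hker).comp (FreeGroup.lift (QuotientGroup.mk' _ ∘ h)) =
      ψ := by
    ext1 k
    simpa using hx (.inr k)
  exact hψ (by rw [← hfactor, MonoidHom.comp_apply, hv, map_one])

/-- **(Stallings-type consequence, Fr\o yshov.)** Let `H = Fₙ / N(w₁,…,wₛ)` with the
abelianized relators `w̄ᵢ ∈ ℤⁿ` linearly independent.  If `h₁,…,h_r ∈ H` are such that no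
nontrivial integer combination of their images in the abelianization of `H` is torsion,
then `h₁,…,h_r` freely generate a free subgroup of `H` of rank `r`: the induced
homomorphism `F_r →* H` is injective. -/
theorem free_subgroup_of_lin_indep
    (n s r : ℕ) (w : Fin s → FreeGroup (Fin n))
    (hw : LinearIndependent ℤ fun i => wordBar (w i))
    (h : Fin r → FreeGroup (Fin n) ⧸ Subgroup.normalClosure (Set.range w))
    (hh : ∀ c : Fin r → ℤ, c ≠ 0 →
      ¬ IsOfFinOrder (∏ i, (Abelianization.of (h i)) ^ (c i))) :
    Function.Injective (FreeGroup.lift h :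
      FreeGroup (Fin r) →* FreeGroup (Fin n) ⧸ Subgroup.normalClosure (Set.range w)) := by
  exact free_subgroup_of_lin_indep_general
    (.of_linearIndependent_comp (freeAbelianization n) hw) (.of_not_isOfFinOrder hh)
end

section
/- The identity 1 is the only singular value of the commutator map on the group of unit quaternions. Precisely: regard the unit sphere S³ = {q ∈ ℍ : ‖q‖ = 1} as a smooth manifold (the sphere in the 4-dimensional real inner product space ℍ = Quaternion ℝ, using Fact (finrank ℝ ℍ = 3 + 1)), and let c : S³ × S³ → S³ be the smooth map c(g, h) = g * h * g⁻¹ * h⁻¹. Then for every (g, h) ∈ S³ × S³ with c(g, h) ≠ 1, the manifold derivative of c at (g, h) (Mathlib: mfderiv) is a surjective linear map from the tangent space of S³ × S³ at (g, h) onto the tangent space of S³ at c(g, h). -/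
open scoped Manifold

noncomputable section

instance : Fact (Module.finrank ℝ (Quaternion ℝ) = 3 + 1) :=
  ⟨Quaternion.finrank_eq_four⟩

/-- `S³`, the unit sphere in the quaternions, as a smooth manifold and a group. -/
abbrev S3 : Type := Metric.sphere (0 : Quaternion ℝ) 1

/-!
Write `k = h * g⁻¹ * h⁻¹`, so that the commutator of `g` and `h` is `g * k`. In the direction
`(g * x, y * h)`, with `x` and `y` imaginary, its derivative in the ambient `ℍ` is
`g * ((x - h * x * h⁻¹) + (y - k * y * k⁻¹)) * k`. The images of `x ↦ x - h * x * h⁻¹` and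
`y ↦ y - k * y * k⁻¹` are the ranges of `ad h` and `ad k`. Since `ad` is skew-adjoint, a quaternion
orthogonal to both commutes with `h` and `k`; as these do not commute, it is real. Hence the two
images together span the imaginary quaternions, and `g * w * k` with `w` imaginary ranges over the
whole tangent space at `g * k`.
-/

open LieAlgebra Metric Module
open scoped ContDiff Quaternion

section Quaternion

attribute [local instance] LieRing.ofAssociativeRing

theorem commute_of_commute_of_im_ne_zero {R : Type*} [CommRing R] [NoZeroDivisors R]
    {a b z : ℍ[R]} (haz : Commute a z) (hbz : Commute b z) (hz : z.im ≠ 0) : Commute a b := by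
  simp only [commute_iff_eq, Quaternion.ext_iff, Quaternion.re_mul, Quaternion.imI_mul,
    Quaternion.imJ_mul, Quaternion.imK_mul] at haz hbz ⊢
  obtain ⟨-, hazI, hazJ, hazK⟩ := haz
  obtain ⟨-, hbzI, hbzJ, hbzK⟩ := hbz
  have eq_zero_of_mul (r : R) (hI : z.imI * r = 0) (hJ : z.imJ * r = 0) (hK : z.imK * r = 0) :
      r = 0 := by
    by_contra hr
    exact hz (QuaternionAlgebra.ext rfl (by simp_all) (by simp_all) (by simp_all))
  -- An imaginary coordinate of `z` times a coordinate of `a * b - b * a` is a combination of the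
  -- coordinates of `a * z - z * a` and `b * z - z * b`.
  refine ⟨by ring, ?_, ?_, ?_⟩ <;> rw [← sub_eq_zero] <;> apply eq_zero_of_mul <;> grind

theorem inner_lie_left_eq_neg (a x y : ℍ) : inner ℝ ⁅a, x⁆ y = -inner ℝ x ⁅a, y⁆ := by
  simp only [Ring.lie_def, Quaternion.inner_def, Quaternion.re_mul, Quaternion.imI_mul,
    Quaternion.imJ_mul, Quaternion.imK_mul, Quaternion.re_sub, Quaternion.imI_sub,
    Quaternion.imJ_sub, Quaternion.imK_sub, Quaternion.re_star, Quaternion.imI_star,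
    Quaternion.imJ_star, Quaternion.imK_star]
  ring

theorem inner_mul_mul_mul (a b x : ℍ) :
    inner ℝ (a * b) (a * x * b) = Quaternion.normSq a * Quaternion.normSq b * x.re := by
  simp only [Quaternion.inner_def, Quaternion.normSq_def', Quaternion.re_mul, Quaternion.imI_mul,
    Quaternion.imJ_mul, Quaternion.imK_mul, Quaternion.re_star, Quaternion.imI_star,
    Quaternion.imJ_star, Quaternion.imK_star]
  ring

theorem commute_of_mem_orthogonal_range_ad {a z : ℍ} (hz : z ∈ (ad ℝ ℍ a).rangeᗮ) :
    Commute a z := by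
  rw [commute_iff_lie_eq, ← inner_self_eq_zero (𝕜 := ℝ), inner_lie_left_eq_neg, neg_eq_zero]
  exact Submodule.inner_left_of_mem_orthogonal (LinearMap.mem_range_self (ad ℝ ℍ a) ⁅a, z⁆) hz

theorem mem_range_ad_sup_range_ad {a b w : ℍ} (hab : ¬Commute a b) (hw : w.re = 0) :
    w ∈ (ad ℝ ℍ a).range ⊔ (ad ℝ ℍ b).range := by
  rw [← Submodule.orthogonal_orthogonal (_ ⊔ _), ← Submodule.inf_orthogonal]
  rintro z ⟨hza, hzb⟩
  have hz : z.im = 0 := by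
    by_contra hz
    exact hab (commute_of_commute_of_im_ne_zero (commute_of_mem_orthogonal_range_ad hza)
      (commute_of_mem_orthogonal_range_ad hzb) hz)
  rw [← Quaternion.re_add_im z, hz]
  simp [Quaternion.inner_def, hw]

theorem im_sub_conj_im {a : ℍ} (ha : a ≠ 0) (x : ℍ) :
    x.im - a * x.im * a⁻¹ = x - a * x * a⁻¹ := by
  have hre : a * (x.re : ℍ) * a⁻¹ = x.re := by
    rw [← Quaternion.coe_commutes, mul_inv_cancel_right₀ ha]
  rw [← Quaternion.sub_re_self, mul_sub, sub_mul, hre]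
  abel

theorem exists_sub_conj_add_sub_conj_eq {a b w : ℍ} (hab : ¬Commute a b) (hw : w.re = 0) :
    ∃ x y : ℍ, x.re = 0 ∧ y.re = 0 ∧ (x - a * x * a⁻¹) + (y - b * y * b⁻¹) = w := by
  have ha : a ≠ 0 := by rintro rfl; exact hab (Commute.zero_left b)
  have hb : b ≠ 0 := by rintro rfl; exact hab (Commute.zero_right a)
  obtain ⟨_, ⟨u, rfl⟩, _, ⟨v, rfl⟩, huv⟩ :=
    Submodule.mem_sup.mp (mem_range_ad_sup_range_ad hab hw)
  have sub_conj {c : ℍ} (hc : c ≠ 0) (t : ℍ) : -(t * c) - c * -(t * c) * c⁻¹ = ⁅c, t⁆ := by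
    rw [Ring.lie_def, mul_neg, neg_mul, ← mul_assoc, mul_inv_cancel_right₀ hc]
    abel
  refine ⟨(-(u * a)).im, (-(v * b)).im, Quaternion.re_im _, Quaternion.re_im _, ?_⟩
  rw [im_sub_conj_im ha, im_sub_conj_im hb, sub_conj ha, sub_conj hb]
  exact huv

end Quaternion

section DivisionRing

theorem commute_self_conj_iff₀ {G₀ : Type*} [GroupWithZero G₀] {a b : G₀} (ha : a ≠ 0) :
    Commute a (a * b * a⁻¹) ↔ Commute a b := by
  rw [commute_iff_eq, inv_mul_cancel_right₀ ha, mul_assoc, mul_right_inj' ha, ← mul_assoc,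
    mul_inv_eq_iff_eq_mul₀ ha, commute_iff_eq]

variable {𝕜 D : Type*} [NontriviallyNormedField 𝕜] [NormedDivisionRing D] [NormedAlgebra 𝕜 D]

variable (𝕜) in
theorem contDiffAt_inv' {n : ℕ∞ω} {x : D} (hx : x ≠ 0) :
    ContDiffAt 𝕜 n (Inv.inv : D → D) x := by
  simpa only [Ring.inverse_eq_inv'] using! contDiffAt_ringInverse 𝕜 (Units.mk0 x hx)

theorem contDiffAt_commutator {n : ℕ∞ω} {g h : D} (hg : g ≠ 0) (hh : h ≠ 0) :
    ContDiffAt 𝕜 n (fun q : D × D => q.1 * q.2 * q.1⁻¹ * q.2⁻¹) (g, h) :=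
  ((contDiffAt_fst.mul contDiffAt_snd).mul
    ((contDiffAt_inv' 𝕜 hg).comp (g, h) contDiffAt_fst)).mul
    ((contDiffAt_inv' 𝕜 hh).comp (g, h) contDiffAt_snd)

theorem fderiv_commutator_apply {g h : D} (hg : g ≠ 0) (hh : h ≠ 0) (a b : D) :
    fderiv 𝕜 (fun q : D × D => q.1 * q.2 * q.1⁻¹ * q.2⁻¹) (g, h) (a, b) =
      a * h * g⁻¹ * h⁻¹ + g * b * g⁻¹ * h⁻¹ - g * h * (g⁻¹ * a * g⁻¹) * h⁻¹ -
        g * h * g⁻¹ * (h⁻¹ * b * h⁻¹) := by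
  have hfst : HasFDerivAt (Prod.fst : D × D → D) (.fst 𝕜 D D) (g, h) := hasFDerivAt_fst
  have hsnd : HasFDerivAt (Prod.snd : D × D → D) (.snd 𝕜 D D) (g, h) := hasFDerivAt_snd
  have hfst_inv := (hasFDerivAt_inv' (𝕜 := 𝕜) hg).comp (g, h) hfst
  have hsnd_inv := (hasFDerivAt_inv' (𝕜 := 𝕜) hh).comp (g, h) hsnd
  have hcomm := ((hfst.mul' hsnd).mul' hfst_inv).mul' hsnd_inv
  refine (DFunLike.congr_fun hcomm.fderiv _).trans ?_
  simp only [Pi.mul_apply, Function.comp_apply, add_apply, neg_apply, smul_apply,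
    ContinuousLinearMap.comp_apply, ContinuousLinearMap.coe_fst', ContinuousLinearMap.coe_snd',
    ContinuousLinearMap.mulLeftRight_apply, smul_eq_mul, MulOpposite.smul_eq_mul_unop,
    MulOpposite.unop_op]
  noncomm_ring

theorem fderiv_commutator_mul_mul {g h : D} (hg : g ≠ 0) (hh : h ≠ 0) (x y : D) :
    fderiv 𝕜 (fun q : D × D => q.1 * q.2 * q.1⁻¹ * q.2⁻¹) (g, h) (g * x, y * h) =
      g * ((x - h * x * h⁻¹) + (y - h * g⁻¹ * h⁻¹ * y * (h * g⁻¹ * h⁻¹)⁻¹)) *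
        (h * g⁻¹ * h⁻¹) := by
  simp only [fderiv_commutator_apply hg hh, mul_add, add_mul, mul_sub, sub_mul]
  simp only [mul_assoc, inv_mul_cancel_left₀ hg, mul_inv_cancel₀ hh, inv_mul_cancel_left₀ hh,
    mul_one, mul_inv_rev, inv_inv, mul_inv_cancel_left₀ hg]
  abel

end DivisionRing

theorem exists_fderiv_commutator_eq {g h z : ℍ} (hgh : ¬Commute g h)
    (hz : inner ℝ (g * h * g⁻¹ * h⁻¹) z = 0) :
    ∃ a b : ℍ, inner ℝ g a = 0 ∧ inner ℝ h b = 0 ∧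
      fderiv ℝ (fun q : ℍ × ℍ => q.1 * q.2 * q.1⁻¹ * q.2⁻¹) (g, h) (a, b) = z := by
  have hg : g ≠ 0 := by rintro rfl; exact hgh (Commute.zero_left h)
  have hh : h ≠ 0 := by rintro rfl; exact hgh (Commute.zero_right g)
  set k : ℍ := h * g⁻¹ * h⁻¹ with hk_def
  have hk : k ≠ 0 := mul_ne_zero (mul_ne_zero hh (inv_ne_zero hg)) (inv_ne_zero hh)
  have hhk : ¬Commute h k := by
    rwa [commute_self_conj_iff₀ hh, Commute.inv_right_iff₀, Commute.symm_iff]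
  obtain ⟨w, rfl⟩ : ∃ w, g * w * k = z :=
    ⟨g⁻¹ * z * k⁻¹, by rw [mul_assoc, inv_mul_cancel_right₀ hk, mul_inv_cancel_left₀ hg]⟩
  have hw : w.re = 0 := by
    rw [mul_assoc g, mul_assoc g, ← hk_def, inner_mul_mul_mul] at hz
    simpa only [mul_eq_zero, Quaternion.normSq_eq_zero, hg, hk, false_or] using hz
  obtain ⟨x, y, hx, hy, hxy⟩ := exists_sub_conj_add_sub_conj_eq hhk hw
  refine ⟨g * x, y * h, ?_, ?_, ?_⟩
  · simpa [hx] using inner_mul_mul_mul g 1 x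
  · simpa [hy] using inner_mul_mul_mul 1 h y
  · rw [fderiv_commutator_mul_mul hg hh, ← hk_def, hxy]

section Sphere

variable {E E₁ E₂ : Type*} [NormedAddCommGroup E] [InnerProductSpace ℝ E]
  [NormedAddCommGroup E₁] [InnerProductSpace ℝ E₁] [NormedAddCommGroup E₂] [InnerProductSpace ℝ E₂]
  {n n₁ n₂ : ℕ} [Fact (finrank ℝ E = n + 1)] [Fact (finrank ℝ E₁ = n₁ + 1)]
  [Fact (finrank ℝ E₂ = n₂ + 1)]

theorem hasMFDerivAt_coe_sphere (v : sphere (0 : E) 1) :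
    HasMFDerivAt (𝓡 n) 𝓘(ℝ, E) ((↑) : sphere (0 : E) 1 → E) v
      (mvfderiv (𝓡 n) ((↑) : sphere (0 : E) 1 → E) v) :=
  ((contMDiff_coe_sphere (m := 1) v).mdifferentiableAt one_ne_zero).hasMFDerivAt

theorem mem_range_mvfderiv_coe_sphere {v : sphere (0 : E) 1} {y : E} :
    y ∈ (mvfderiv (𝓡 n) ((↑) : sphere (0 : E) 1 → E) v).range ↔ inner ℝ (v : E) y = 0 := by
  rw [range_mvfderiv_subtypeVal, Submodule.mem_orthogonal_singleton_iff_inner_right]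

variable {F H M : Type*} [NormedAddCommGroup F] [NormedSpace ℝ F] [TopologicalSpace H]
  {I : ModelWithCorners ℝ F H} [TopologicalSpace M] [ChartedSpace H M]

theorem surjective_mfderiv_of_forall_inner_eq_zero {f : M → sphere (0 : E) 1} {x : M}
    {L : TangentSpace I x →L[ℝ] E} (hf : MDifferentiableAt I (𝓡 n) f x)
    (hL : HasMFDerivAt I 𝓘(ℝ, E) (fun m => (f m : E)) x L)
    (hrange : ∀ y : E, inner ℝ (f x : E) y = 0 → ∃ t, L t = y) :
    Function.Surjective (mfderiv I (𝓡 n) f x) := by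
  intro Y
  have hL_eq := hasMFDerivAt_unique hL ((hasMFDerivAt_coe_sphere (f x)).comp x hf.hasMFDerivAt)
  obtain ⟨t, ht⟩ := hrange _ (mem_range_mvfderiv_coe_sphere.mp ⟨Y, rfl⟩)
  refine ⟨t, injective_mvfderiv_subtypeVal_sphere (f x) ?_⟩
  exact (DFunLike.congr_fun hL_eq t).symm.trans ht

theorem contMDiff_coe_sphere_prod {m : ℕ∞ω} :
    ContMDiff ((𝓡 n₁).prod (𝓡 n₂)) 𝓘(ℝ, E₁ × E₂) m
      (fun q : sphere (0 : E₁) 1 × sphere (0 : E₂) 1 => ((q.1 : E₁), (q.2 : E₂))) :=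
  (contMDiff_coe_sphere.comp contMDiff_fst).prodMk_space (contMDiff_coe_sphere.comp contMDiff_snd)

theorem hasMFDerivAt_coe_sphere_prod (p : sphere (0 : E₁) 1 × sphere (0 : E₂) 1) :
    HasMFDerivAt ((𝓡 n₁).prod (𝓡 n₂)) 𝓘(ℝ, E₁ × E₂)
      (fun q : sphere (0 : E₁) 1 × sphere (0 : E₂) 1 => ((q.1 : E₁), (q.2 : E₂))) p
      ((mvfderiv (𝓡 n₁) ((↑) : sphere (0 : E₁) 1 → E₁) p.1).prodMap
        (mvfderiv (𝓡 n₂) ((↑) : sphere (0 : E₂) 1 → E₂) p.2)) := by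
  have hfst := (hasMFDerivAt_coe_sphere p.1).comp p (hasMFDerivAt_fst (I := 𝓡 n₁) (I' := 𝓡 n₂) p)
  have hsnd := (hasMFDerivAt_coe_sphere p.2).comp p (hasMFDerivAt_snd (I := 𝓡 n₁) (I' := 𝓡 n₂) p)
  exact ⟨hfst.1.prodMk hsnd.1, hfst.2.prodMk hsnd.2⟩

variable {f : sphere (0 : E₁) 1 × sphere (0 : E₂) 1 → sphere (0 : E) 1} {φ : E₁ × E₂ → E}

theorem contMDiff_of_coe_sphere_eq {m : ℕ∞ω}
    (hφ : ∀ q : sphere (0 : E₁) 1 × sphere (0 : E₂) 1, ContDiffAt ℝ m φ (q.1, q.2))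
    (hfφ : ∀ q, (f q : E) = φ (q.1, q.2)) :
    ContMDiff ((𝓡 n₁).prod (𝓡 n₂)) (𝓡 n) m f := by
  have hcoe : ContMDiff ((𝓡 n₁).prod (𝓡 n₂)) 𝓘(ℝ, E) m (fun q => (f q : E)) := by
    rw [funext hfφ]
    exact fun q => (hφ q).contMDiffAt.comp q (contMDiff_coe_sphere_prod q)
  exact hcoe.codRestrict_sphere fun q => (f q).2

theorem surjective_mfderiv_of_coe_sphere_eq {p : sphere (0 : E₁) 1 × sphere (0 : E₂) 1}
    (hφ : ∀ q : sphere (0 : E₁) 1 × sphere (0 : E₂) 1, ContDiffAt ℝ 1 φ (q.1, q.2))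
    (hfφ : ∀ q, (f q : E) = φ (q.1, q.2))
    (hrange : ∀ z, inner ℝ (f p : E) z = 0 → ∃ a b,
      inner ℝ (p.1 : E₁) a = 0 ∧ inner ℝ (p.2 : E₂) b = 0 ∧ fderiv ℝ φ (p.1, p.2) (a, b) = z) :
    Function.Surjective (mfderiv ((𝓡 n₁).prod (𝓡 n₂)) (𝓡 n) f p) := by
  have hf : MDifferentiableAt ((𝓡 n₁).prod (𝓡 n₂)) (𝓡 n) f p :=
    (contMDiff_of_coe_sphere_eq hφ hfφ p).mdifferentiableAt one_ne_zero
  have hcoe := ((hφ p).differentiableAt one_ne_zero).hasFDerivAt.hasMFDerivAt.comp p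
    (hasMFDerivAt_coe_sphere_prod (n₁ := n₁) (n₂ := n₂) p)
  refine surjective_mfderiv_of_forall_inner_eq_zero hf (hcoe.congr_of_eventuallyEq (.of_forall hfφ))
    fun z hz => ?_
  obtain ⟨a, b, ha, hb, hab⟩ := hrange z hz
  obtain ⟨s, rfl⟩ := (mem_range_mvfderiv_coe_sphere (n := n₁)).mpr ha
  obtain ⟨t, rfl⟩ := (mem_range_mvfderiv_coe_sphere (n := n₂)).mpr hb
  exact ⟨(s, t), hab⟩

end Sphere

/-- **Lemma 3.3 (ii) (Fr\o yshov).** `1` is the only singular value of the commutator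
map `S³ × S³ → S³, (g,h) ↦ ghg⁻¹h⁻¹`: at every point where the commutator is not `1`,
the manifold derivative of the commutator map is surjective. -/
theorem commutator_map_submersion_away_from_one
    (p : S3 × S3) (hp : p.1 * p.2 * p.1⁻¹ * p.2⁻¹ ≠ 1) :
    Function.Surjective
      (mfderiv ((𝓡 3).prod (𝓡 3)) (𝓡 3)
        (fun q : S3 × S3 => q.1 * q.2 * q.1⁻¹ * q.2⁻¹) p) := by
  have hne (x : S3) : (x : ℍ) ≠ 0 := ne_zero_of_mem_unit_sphere x
  have hnc : ¬Commute (p.1 : ℍ) p.2 := fun hcomm => hp <|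
    commutatorElement_eq_one_iff_mul_comm.mpr (Subtype.ext hcomm)
  exact surjective_mfderiv_of_coe_sphere_eq
    (fun q => contDiffAt_commutator (hne q.1) (hne q.2)) (fun _ => rfl)
    (fun _ => exists_fderiv_commutator_eq hnc)
end
end

section
/- Let 0 ≤ s ≤ n, let u₁,…,uₛ ∈ ℤⁿ be linearly independent, let K ⊆ ℤⁿ be the subgroup generated by u₁,…,uₛ, let A := ℤⁿ/K, and let T be the torsion subgroup of A (which is finite). Then for any z₁,…,z_{n−s} ∈ ℤⁿ and any group isomorphism θ : A/T ≅ ℤ^{n−s}, the absolute value of the determinant of the n×n integer matrix with rows u₁,…,uₛ, z₁,…,z_{n−s} equals |T| times the absolute value of the determinant of the (n−s)×(n−s) integer matrix with rows θ(z̄₁),…,θ(z̄_{n−s}), where z̄ⱼ denotes the image of zⱼ in A/T and |T| is the cardinality of T. -/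
/-!
Let `φ : ℤⁿ → A/T` be the quotient map and `W` its kernel, the saturation of `K` in `ℤⁿ`. A basis
of `W` together with lifts of a basis of `A/T` is a basis of `ℤⁿ`, and in it the matrix of
`u₁,…,uₛ, z₁,…,z_{n-s}` is block triangular because the `uᵢ` lie in `W`. One diagonal block has
determinant `±[W : K]`, and `W/K = T`; the other one expresses the `φ(zⱼ)` in a basis of `A/T`.
-/

open Module

section

variable {R M N ι κ : Type*}

theorem nonempty_basis_submodule_of_basis_quotient [Finite ι] [Finite κ] [CommRing R]
    [IsDomain R] [IsPrincipalIdealRing R] [AddCommGroup M] [Module R M] {W : Submodule R M}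
    (c : Basis (ι ⊕ κ) R M) (bQ : Basis κ R (M ⧸ W)) : Nonempty (Basis ι R W) := by
  have : Module.Free R M := .of_basis c
  have : Module.Finite R M := .of_basis c
  have finrank_W : finrank R W = Nat.card ι := by
    have rank_nullity := W.finrank_quotient_add_finrank
    rw [finrank_eq_nat_card_basis c, finrank_eq_nat_card_basis bQ, Nat.card_sum] at rank_nullity
    omega
  exact ⟨(finBasisOfFinrankEq R W finrank_W).reindex (Finite.equivFin ι).symm⟩

theorem relIndex_comap_mkQ [Ring R] [AddCommGroup M] [Module R M] (K : Submodule R M)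
    (T : Submodule R (M ⧸ K)) :
    K.toAddSubgroup.relIndex (T.comap K.mkQ).toAddSubgroup = Nat.card T := by
  have ker_mkQ : K.mkQ.toAddMonoidHom.ker = K.toAddSubgroup := QuotientAddGroup.ker_mk' _
  have map_comap : (T.comap K.mkQ).toAddSubgroup.map K.mkQ.toAddMonoidHom = T.toAddSubgroup :=
    AddSubgroup.map_comap_eq_self_of_surjective K.mkQ_surjective T.toAddSubgroup
  have relIndex_ker :=
    AddSubgroup.relIndex_ker (T.comap K.mkQ).toAddSubgroup K.mkQ.toAddMonoidHom
  rwa [ker_mkQ, map_comap] at relIndex_ker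

variable [Fintype ι] [Fintype κ] [DecidableEq ι] [DecidableEq κ]

theorem associated_basis_det [CommRing R] [AddCommGroup M] [Module R M]
    (b c : Basis ι R M) (v : ι → M) : Associated (b.det v) (c.det v) := by
  rw [b.det.eq_smul_basis_det c, AlternatingMap.smul_apply, smul_eq_mul]
  exact associated_unit_mul_left _ _ (b.isUnit_det c)

theorem det_sumQuot_sumElim [CommRing R] [AddCommGroup M] [Module R M] {W : Submodule R M}
    (bW : Basis ι R W) (bQ : Basis κ R (M ⧸ W)) (u : ι → W) (z : κ → M) :
    (bW.sumQuot bQ).det (Sum.elim (fun i ↦ (u i : M)) z) = bW.det u * bQ.det (W.mkQ ∘ z) := by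
  have toMatrix_eq : (bW.sumQuot bQ).toMatrix (Sum.elim (fun i ↦ (u i : M)) z) =
      Matrix.fromBlocks (bW.toMatrix u)
        (Matrix.of fun i j ↦ (bW.sumQuot bQ).repr (z j) (Sum.inl i))
        0 (bQ.toMatrix (W.mkQ ∘ z)) := by
    ext (i | i) (j | j) <;>
      simp [Basis.toMatrix_apply, (Submodule.Quotient.mk_eq_zero W).2 (u _).2]
  simp only [Basis.det_apply, toMatrix_eq, Matrix.det_fromBlocks_zero₂₁]

theorem relIndex_span_range_eq_natAbs_det [AddCommGroup M] {W : Submodule ℤ M}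
    (bW : Basis ι ℤ W) {u : ι → W} (hu : LinearIndependent ℤ fun i ↦ (u i : M)) :
    (Submodule.span ℤ (Set.range fun i ↦ (u i : M))).toAddSubgroup.relIndex W.toAddSubgroup =
      (bW.det u).natAbs := by
  have span_le : Submodule.span ℤ (Set.range fun i ↦ (u i : M)) ≤ W :=
    Submodule.span_le.2 (Set.range_subset_iff.2 fun i ↦ (u i).2)
  have coe_basis_span (i : ι) : (Basis.span hu i : M) = u i := by rw [Basis.span_apply]
  refine (AddSubgroup.relIndex_eq_natAbs_det _ _ span_le (Basis.span hu) bW).trans ?_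
  congr 2
  exact funext fun i ↦ Subtype.ext (coe_basis_span i)

theorem natAbs_det_sumElim_eq_relIndex_ker_mul [AddCommGroup M] [AddCommGroup N]
    (c : Basis (ι ⊕ κ) ℤ M) (b : Basis κ ℤ N) {φ : M →ₗ[ℤ] N} (hφ : Function.Surjective φ)
    {u : ι → M} (hu : LinearIndependent ℤ u) (hφu : ∀ i, u i ∈ φ.ker) (z : κ → M) :
    (c.det (Sum.elim u z)).natAbs =
      (Submodule.span ℤ (Set.range u)).toAddSubgroup.relIndex φ.ker.toAddSubgroup *
        (b.det (φ ∘ z)).natAbs := by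
  let bQ : Basis κ ℤ (M ⧸ φ.ker) := b.map (φ.quotKerEquivOfSurjective hφ).symm
  obtain ⟨bW⟩ := nonempty_basis_submodule_of_basis_quotient c bQ
  have det_bQ : bQ.det (φ.ker.mkQ ∘ z) = b.det (φ ∘ z) := Basis.det_map _ _ _
  lift u to ι → φ.ker using hφu
  calc (c.det (Sum.elim (fun i ↦ (u i : M)) z)).natAbs
      = ((bW.sumQuot bQ).det (Sum.elim (fun i ↦ (u i : M)) z)).natAbs :=
        Int.natAbs_eq_iff_associated.2 (associated_basis_det _ _ _)
    _ = (bW.det u).natAbs * (b.det (φ ∘ z)).natAbs := by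
        rw [det_sumQuot_sumElim, det_bQ, Int.natAbs_mul]
    _ = _ := by rw [relIndex_span_range_eq_natAbs_det bW hu]

theorem det_rows_eq_torsion_card_mul_det_general [AddCommGroup M] (c : Basis (ι ⊕ κ) ℤ M)
    {u : ι → M} (hu : LinearIndependent ℤ u) (z : κ → M)
    (b : Basis κ ℤ ((M ⧸ Submodule.span ℤ (Set.range u)) ⧸
      Submodule.torsion ℤ (M ⧸ Submodule.span ℤ (Set.range u)))) :
    (c.det (Sum.elim u z)).natAbs =
      Nat.card (Submodule.torsion ℤ (M ⧸ Submodule.span ℤ (Set.range u))) *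
        (b.det fun j ↦ Submodule.Quotient.mk (Submodule.Quotient.mk (z j))).natAbs := by
  let K := Submodule.span ℤ (Set.range u)
  let T := Submodule.torsion ℤ (M ⧸ K)
  let φ : M →ₗ[ℤ] (M ⧸ K) ⧸ T := T.mkQ ∘ₗ K.mkQ
  have hφ : Function.Surjective φ := T.mkQ_surjective.comp K.mkQ_surjective
  have ker_φ : φ.ker = T.comap K.mkQ := by rw [LinearMap.ker_comp, T.ker_mkQ]
  have hφu (i : ι) : u i ∈ φ.ker := by
    rw [ker_φ]
    exact K.le_comap_mkQ T (Submodule.subset_span (Set.mem_range_self i))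
  have key := natAbs_det_sumElim_eq_relIndex_ker_mul c b hφ hu hφu z
  rwa [ker_φ, relIndex_comap_mkQ] at key

end

theorem sumElim_comp_finSumFinEquiv_symm {α : Type*} {m n : ℕ} (u : Fin m → α) (z : Fin n → α) :
    Sum.elim u z ∘ finSumFinEquiv.symm = Fin.append u z :=
  (Equiv.comp_symm_eq _ _ _).2 Fin.append_comp_sumElim.symm

theorem det_of_append_cast {R : Type*} [CommRing R] {n s m : ℕ} (h : n = s + m)
    (u : Fin s → Fin n → R) (z : Fin m → Fin n → R) :
    (Matrix.of fun i j ↦ Fin.append u z (Fin.cast h i) j).det =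
      ((Pi.basisFun R (Fin n)).reindex ((finCongr h).trans finSumFinEquiv.symm)).det
        (Sum.elim u z) := by
  rw [Basis.det_reindex, Equiv.coe_trans, ← Function.comp_assoc,
    sumElim_comp_finSumFinEquiv_symm, Pi.basisFun_det]
  rfl

/-- **(Elementary-divisors determinant identity, used in the proofs of Theorems 2.2 and
1.2 of Fr\o yshov.)** Let `u₁,…,uₛ ∈ ℤⁿ` be linearly independent (`s ≤ n`), let
`K = span(u₁,…,uₛ)`, `A = ℤⁿ/K`, `T ⊆ A` the torsion subgroup.  Then for any
`z₁,…,z_{n−s} ∈ ℤⁿ` and any isomorphism `θ : A/T ≃ ℤ^{n−s}`,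
`|det(u₁,…,uₛ,z₁,…,z_{n−s})| = |T| ⬝ |det(θ(z̄₁),…,θ(z̄_{n−s}))|`. -/
theorem det_rows_eq_torsion_card_mul_det (n s : ℕ) (hsn : s ≤ n)
    (u : Fin s → (Fin n → ℤ)) (hu : LinearIndependent ℤ u)
    (z : Fin (n - s) → (Fin n → ℤ))
    (θ : ((((Fin n → ℤ) ⧸ Submodule.span ℤ (Set.range u)) ⧸
        Submodule.torsion ℤ ((Fin n → ℤ) ⧸ Submodule.span ℤ (Set.range u)))) ≃+
      (Fin (n - s) → ℤ)) :
    (Matrix.of fun i j =>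
        Fin.append u z (Fin.cast (by omega : n = s + (n - s)) i) j).det.natAbs =
      Nat.card (Submodule.torsion ℤ ((Fin n → ℤ) ⧸ Submodule.span ℤ (Set.range u))) *
        (Matrix.of fun i j =>
          θ (Submodule.Quotient.mk (Submodule.Quotient.mk (z i))) j).det.natAbs := by
  rw [det_of_append_cast, det_rows_eq_torsion_card_mul_det_general _ hu z
    ((Pi.basisFun ℤ (Fin (n - s))).map θ.toIntLinearEquiv.symm), Basis.det_map, Pi.basisFun_det]
  rfl
end

section
/- Let v be an element of the commutator subgroup of the free group Fₙ on n generators, and let ψ be a group homomorphism from Fₙ to the group Sp(1) of unit quaternions with ψ(v) = −1. Then the centralizer of the range of ψ in Sp(1) is {1, −1}; that is, every unit quaternion q satisfying q * ψ(w) = ψ(w) * q for all w ∈ Fₙ equals 1 or −1. -/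
noncomputable section

/-- `Sp(1)`, the group of unit quaternions. -/
abbrev Sp1 : Type := Metric.sphere (0 : Quaternion ℝ) 1

/-!
A quaternion commuting with a non-real quaternion `q` has imaginary part parallel to that of `q`,
so the centralizer of `q` is commutative. If a non-real `q` centralized the range of `ψ`, that range
would be commutative and `ψ` would be trivial on the commutator subgroup, contradicting `ψ v ≠ 1`.
Hence `q` is real, and the real quaternions of norm one are `±1`.
-/

open Quaternion

theorem commute_im_left_iff {R : Type*} [CommRing R] {q a : ℍ[R]} :
    Commute q.im a ↔ Commute q a := by
  refine ⟨fun h ↦ ?_, fun h ↦ ?_⟩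
  · rw [← re_add_im q]
    exact (coe_commute q.re a).add_left h
  · rw [← sub_re_self q]
    exact h.sub_left (coe_commute q.re a)

section OrderedField

variable {R : Type*} [Field R] [LinearOrder R] [IsStrictOrderedRing R] {q a b : ℍ[R]}

theorem exists_im_eq_smul_im_of_commute (hq : q.im ≠ 0) (h : Commute q a) :
    ∃ s : R, a.im = s • q.im := by
  have him : Commute a.im q.im := commute_im_left_iff.2 (commute_im_left_iff.2 h).symm
  -- A product of two commuting imaginary quaternions is self-adjoint, hence real.
  obtain ⟨t, ht⟩ : ∃ t : R, a.im * q.im = t := by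
    refine ⟨_, star_eq_self.1 ?_⟩
    rw [star_mul, star_im, star_im, neg_mul_neg, him.eq]
  refine ⟨t * -(normSq q.im)⁻¹, ?_⟩
  calc a.im = t * q.im⁻¹ := (eq_mul_inv_iff_mul_eq₀ hq).2 ht
    _ = (t * -(normSq q.im)⁻¹) • q.im := by
      rw [inv_def, star_im, coe_mul_eq_smul, smul_smul, smul_neg, mul_neg, neg_smul]

theorem commute_of_commute_of_im_ne_zero_s11 (hq : q.im ≠ 0) (ha : Commute q a) (hb : Commute q b) :
    Commute a b := by
  obtain ⟨s, hs⟩ := exists_im_eq_smul_im_of_commute hq ha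
  rw [← commute_im_left_iff, hs]
  exact (commute_im_left_iff.2 hb).smul_left s

end OrderedField

theorem eq_one_or_eq_neg_one_of_norm_eq_one_of_im_eq_zero {q : ℍ[ℝ]} (hnorm : ‖q‖ = 1)
    (him : q.im = 0) : q = 1 ∨ q = -1 := by
  have hre : q = q.re := by simpa [him] using (re_add_im q).symm
  rw [hre, norm_coe, Real.norm_eq_abs, abs_eq zero_le_one] at hnorm
  rw [hre]
  exact hnorm.imp (fun h ↦ by simp [h]) (fun h ↦ by simp [h])

theorem commutator_le_ker_of_commute {G H : Type*} [Group G] [Group H] {f : G →* H}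
    (hf : ∀ x y, Commute (f x) (f y)) : commutator G ≤ f.ker := by
  rw [commutator_def, Subgroup.commutator_le]
  intro x _ y _
  rw [MonoidHom.mem_ker, map_commutatorElement, commutatorElement_eq_one_iff_commute]
  exact hf x y

theorem centralizer_of_rep_eq_pm_one_general {G : Type*} [Group G] {v : G}
    (hv : v ∈ commutator G) {ψ : G →* Sp1} (hψv : ψ v ≠ 1) {q : Sp1}
    (hq : ∀ w, Commute q (ψ w)) : (q : ℍ[ℝ]) = 1 ∨ (q : ℍ[ℝ]) = -1 := by
  refine eq_one_or_eq_neg_one_of_norm_eq_one_of_im_eq_zero (norm_eq_of_mem_sphere q) ?_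
  by_contra him
  have hq_coe (w : G) : Commute (q : ℍ[ℝ]) (ψ w) := congrArg Subtype.val (hq w)
  have hψ (x y : G) : Commute (ψ x) (ψ y) :=
    Subtype.ext (commute_of_commute_of_im_ne_zero_s11 him (hq_coe x) (hq_coe y))
  exact hψv (commutator_le_ker_of_commute hψ hv)

/-- **(Irreducibility of representations with `ψ(v) = -1`, Fr\o yshov.)** If `v` lies in
the commutator subgroup of `Fₙ` and `ψ : Fₙ →* Sp(1)` satisfies `ψ(v) = -1`, then the
centralizer of the range of `ψ` in `Sp(1)` is `{1, -1}`: every unit quaternion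
commuting with all values of `ψ` is `1` or `-1`. -/
theorem centralizer_of_rep_eq_pm_one (n : ℕ) (v : FreeGroup (Fin n))
    (hv : v ∈ commutator (FreeGroup (Fin n)))
    (ψ : FreeGroup (Fin n) →* Sp1)
    (hψv : ((ψ v : Quaternion ℝ)) = -1) :
    ∀ q : Sp1, (∀ w : FreeGroup (Fin n), q * ψ w = ψ w * q) →
      ((q : Quaternion ℝ) = 1 ∨ (q : Quaternion ℝ) = -1) := by
  have hψv_ne : ψ v ≠ 1 := fun h ↦ by norm_num [h, Quaternion.ext_iff] at hψv
  exact fun q hq ↦ centralizer_of_rep_eq_pm_one_general hv hψv_ne hq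
end
end

section
/- The unit quaternion group acts transitively by simultaneous conjugation on the set of pairs of unit quaternions with commutator −1: if g, h, g', h' ∈ ℍ = Quaternion ℝ are unit quaternions with g * h * g⁻¹ * h⁻¹ = −1 and g' * h' * g'⁻¹ * h'⁻¹ = −1, then there exists a unit quaternion x such that x * g * x⁻¹ = g' and x * h * x⁻¹ = h'. -/
/-!
A unit quaternion anticommuting with another one has real part zero, hence squares to `-1`; so
the two pairs have the same squares. From then on only the ring structure of `ℍ` matters. If `y`
intertwines `a ^ 2` with `b ^ 2`, then `y * a + b * y` intertwines `a` with `b`, unless it vanishes,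
in which case `y` intertwines `a` with `-b`, and that sign can be corrected by an element
anticommuting with `a`. Doing this first for `g, g'` and then for `h, h'` gives a nonzero
intertwiner of the two pairs, which is finally scaled to norm one.
-/

/-- Two elements anticommute if `a * b = -b * a`, that is, if `a` semiconjugates `b` to `-b`. The
definition goes through `SemiconjBy` so that its calculus of products and sums applies. -/
def Anticommute {A : Type*} [Mul A] [Neg A] (a b : A) : Prop :=
  SemiconjBy a b (-b)

namespace Anticommute

theorem symm {A : Type*} [Mul A] [HasDistribNeg A] {a b : A} (hab : Anticommute a b) :
    Anticommute b a := by
  rw [Anticommute, SemiconjBy, neg_mul, hab.eq, neg_mul, neg_neg]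

theorem commute_sq {A : Type*} [Monoid A] [HasDistribNeg A] {a b : A} (hab : Anticommute a b) :
    Commute a (b ^ 2) := by
  have hab_sq : SemiconjBy a (b ^ 2) ((-b) ^ 2) := hab.pow_right 2
  rwa [neg_sq] at hab_sq

theorem semiconjBy_mul {A : Type*} [Semigroup A] [HasDistribNeg A] {y s a b : A}
    (hs : Anticommute s a) (hy : SemiconjBy y a (-b)) : SemiconjBy (y * s) a b := by
  have hy_neg : SemiconjBy y (-a) b := by simpa only [neg_neg] using hy.neg_right
  exact hy_neg.mul_left hs

end Anticommute

section Intertwiners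

variable {A : Type*} [Ring A] {a b a' b' y z : A}

theorem semiconjBy_mul_add_mul (hy : SemiconjBy y (a ^ 2) (b ^ 2)) :
    SemiconjBy (y * a + b * y) a b := by
  calc (y * a + b * y) * a = y * a ^ 2 + b * y * a := by noncomm_ring
    _ = b ^ 2 * y + b * y * a := by rw [hy.eq]
    _ = b * (y * a + b * y) := by noncomm_ring

theorem semiconjBy_neg_mul_add_mul (hz : SemiconjBy z a a')
    (hab : Anticommute a b) (hab' : Anticommute a' b') :
    SemiconjBy (z * b + b' * z) a (-a') := by
  have hzb : SemiconjBy (z * b) a (-a') := hz.neg_right.mul_left hab.symm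
  have hbz : SemiconjBy (b' * z) a (-a') := SemiconjBy.mul_left hab'.symm hz
  exact hzb.add_left hbz

variable [NoZeroDivisors A]

theorem exists_ne_zero_semiconjBy_pair_of_semiconjBy (ha : a ≠ 0) (hb : b ≠ 0) (hz₀ : z ≠ 0)
    (hab : Anticommute a b) (hab' : Anticommute a' b')
    (hza : SemiconjBy z a a') (hzb : SemiconjBy z (b ^ 2) (b' ^ 2)) :
    ∃ x ≠ 0, SemiconjBy x a a' ∧ SemiconjBy x b b' := by
  by_cases hw₀ : z * b + b' * z = 0
  · have hz_neg : SemiconjBy z b (-b') := by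
      rw [SemiconjBy, neg_mul, eq_neg_of_add_eq_zero_left hw₀]
    exact ⟨z * a, mul_ne_zero hz₀ ha, hza.mul_left (Commute.refl a), hab.semiconjBy_mul hz_neg⟩
  · have hwa : SemiconjBy (z * b + b' * z) a (-a') := semiconjBy_neg_mul_add_mul hza hab hab'
    have hwb : SemiconjBy (z * b + b' * z) b b' := semiconjBy_mul_add_mul hzb
    exact ⟨(z * b + b' * z) * b, mul_ne_zero hw₀ hb, hab.symm.semiconjBy_mul hwa,
      hwb.mul_left (Commute.refl b)⟩

theorem exists_ne_zero_semiconjBy_pair_of_sq_eq (ha : a ≠ 0) (hb : b ≠ 0)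
    (hab : Anticommute a b) (hab' : Anticommute a' b')
    (ha_sq : a ^ 2 = a' ^ 2) (hb_sq : b ^ 2 = b' ^ 2) :
    ∃ x ≠ 0, SemiconjBy x a a' ∧ SemiconjBy x b b' := by
  by_cases hsum : a + a' = 0
  · have hba : SemiconjBy b a a' := eq_neg_of_add_eq_zero_right hsum ▸ hab.symm
    have hbb : SemiconjBy b (b ^ 2) (b' ^ 2) := hb_sq ▸ (Commute.refl b).pow_right 2
    exact exists_ne_zero_semiconjBy_pair_of_semiconjBy ha hb hb hab hab' hba hbb
  · have hsum_a : SemiconjBy (a + a') a a' := by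
      have hone : SemiconjBy 1 (a ^ 2) (a' ^ 2) := by rw [ha_sq]; exact SemiconjBy.one_left _
      simpa only [one_mul, mul_one] using semiconjBy_mul_add_mul hone
    have hsum_b : SemiconjBy (a + a') (b ^ 2) (b' ^ 2) :=
      hb_sq ▸ hab.commute_sq.add_left (hb_sq ▸ hab'.commute_sq)
    exact exists_ne_zero_semiconjBy_pair_of_semiconjBy ha hb hsum hab hab' hsum_a hsum_b

end Intertwiners

section DivisionRing

variable {D : Type*} [DivisionRing D] {a b : D}

theorem ne_zero_of_commutator_eq_neg_one (hc : a * b * a⁻¹ * b⁻¹ = -1) : a ≠ 0 ∧ b ≠ 0 := by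
  constructor <;> rintro rfl <;> simp at hc

theorem anticommute_of_commutator_eq_neg_one (hc : a * b * a⁻¹ * b⁻¹ = -1) :
    Anticommute a b := by
  obtain ⟨ha, hb⟩ := ne_zero_of_commutator_eq_neg_one hc
  rwa [mul_inv_eq_iff_eq_mul₀ hb, neg_one_mul, mul_inv_eq_iff_eq_mul₀ ha] at hc

end DivisionRing

theorem exists_norm_eq_one_conj_eq_of_semiconjBy {D : Type*} [NormedDivisionRing D]
    [NormedAlgebra ℝ D] {x : D} (hx : x ≠ 0) :
    ∃ u : D, ‖u‖ = 1 ∧ ∀ a b : D, SemiconjBy x a b → u * a * u⁻¹ = b := by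
  have hu : (‖x‖⁻¹ : ℝ) • x ≠ 0 := smul_ne_zero (inv_ne_zero (norm_ne_zero_iff.mpr hx)) hx
  exact ⟨(‖x‖⁻¹ : ℝ) • x, norm_smul_inv_norm (𝕜 := ℝ) hx, fun a b hab =>
    (mul_inv_eq_iff_eq_mul₀ hu).mpr (hab.smul_left _).eq⟩

section Quaternion

open Quaternion

theorem quaternion_re_mul_comm {R : Type*} [CommRing R] (a b : ℍ[R]) :
    (a * b).re = (b * a).re := by
  simp only [re_mul]
  ring

variable {R : Type*} [CommRing R] [LinearOrder R] [IsStrictOrderedRing R] {a b : ℍ[R]}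

theorem Anticommute.quaternion_re_eq_zero (hb : b ≠ 0) (hab : Anticommute a b) : a.re = 0 := by
  have hre : normSq b * a.re = -(normSq b * a.re) :=
    calc normSq b * a.re = (a * b * star b).re := by
          rw [mul_assoc, self_mul_star, mul_coe_eq_smul, re_smul, smul_eq_mul]
      _ = -(b * (a * star b)).re := by rw [hab.eq, neg_mul, neg_mul, re_neg, mul_assoc]
      _ = -(a * star b * b).re := by rw [quaternion_re_mul_comm]
      _ = -(normSq b * a.re) := by
          rw [mul_assoc, star_mul_self, mul_coe_eq_smul, re_smul, smul_eq_mul]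
  exact (mul_eq_zero.mp (self_eq_neg.mp hre)).resolve_left (normSq_ne_zero.mpr hb)

theorem Anticommute.quaternion_sq_eq_neg_normSq (hb : b ≠ 0) (hab : Anticommute a b) :
    a ^ 2 = -normSq a :=
  sq_eq_neg_normSq.mpr (hab.quaternion_re_eq_zero hb)

end Quaternion

theorem conjugation_transitive_on_anticommuting_pairs_general
    (g h g' h' : Quaternion ℝ) (hg : ‖g‖ = ‖g'‖) (hh : ‖h‖ = ‖h'‖)
    (hc : g * h * g⁻¹ * h⁻¹ = -1) (hc' : g' * h' * g'⁻¹ * h'⁻¹ = -1) :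
    ∃ x : Quaternion ℝ, ‖x‖ = 1 ∧ x * g * x⁻¹ = g' ∧ x * h * x⁻¹ = h' := by
  obtain ⟨hg₀, hh₀⟩ := ne_zero_of_commutator_eq_neg_one hc
  obtain ⟨hg'₀, hh'₀⟩ := ne_zero_of_commutator_eq_neg_one hc'
  have hgh : Anticommute g h := anticommute_of_commutator_eq_neg_one hc
  have hgh' : Anticommute g' h' := anticommute_of_commutator_eq_neg_one hc'
  have hg_sq : g ^ 2 = g' ^ 2 := by
    rw [hgh.quaternion_sq_eq_neg_normSq hh₀, hgh'.quaternion_sq_eq_neg_normSq hh'₀,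
      Quaternion.normSq_eq_norm_mul_self, Quaternion.normSq_eq_norm_mul_self, hg]
  have hh_sq : h ^ 2 = h' ^ 2 := by
    rw [hgh.symm.quaternion_sq_eq_neg_normSq hg₀, hgh'.symm.quaternion_sq_eq_neg_normSq hg'₀,
      Quaternion.normSq_eq_norm_mul_self, Quaternion.normSq_eq_norm_mul_self, hh]
  obtain ⟨x, hx, hxg, hxh⟩ :=
    exists_ne_zero_semiconjBy_pair_of_sq_eq hg₀ hh₀ hgh hgh' hg_sq hh_sq
  obtain ⟨u, hu, hconj⟩ := exists_norm_eq_one_conj_eq_of_semiconjBy hx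
  exact ⟨u, hu, hconj g g' hxg, hconj h h' hxh⟩

/-- **(Transitivity of conjugation on pairs with commutator `−1`.)** If `(g, h)` and
`(g', h')` are pairs of unit quaternions with `ghg⁻¹h⁻¹ = −1 = g'h'g'⁻¹h'⁻¹`, then there
is a unit quaternion `x` with `xgx⁻¹ = g'` and `xhx⁻¹ = h'`. -/
theorem conjugation_transitive_on_anticommuting_pairs
    (g h g' h' : Quaternion ℝ)
    (hg : ‖g‖ = 1) (hh : ‖h‖ = 1) (hg' : ‖g'‖ = 1) (hh' : ‖h'‖ = 1)
    (hc : g * h * g⁻¹ * h⁻¹ = -1) (hc' : g' * h' * g'⁻¹ * h'⁻¹ = -1) :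
    ∃ x : Quaternion ℝ, ‖x‖ = 1 ∧ x * g * x⁻¹ = g' ∧ x * h * x⁻¹ = h' :=
  conjugation_transitive_on_anticommuting_pairs_general g h g' h'
    (hg.trans hg'.symm) (hh.trans hh'.symm) hc hc'
end
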